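/- Let T be a computable infinite binary tree whose set of paths is finite. Then T has a computable path. -/

import Mathlib

/-- A binary tree: a set of binary strings closed under taking prefixes. -/
def IsBinTree (T : Set (List Bool)) : Prop :=
  ∀ σ τ : List Bool, σ <+: τ → τ ∈ T → σ ∈ T

/-- `f : ℕ → Bool` is a path of `T`: every initial segment `[f 0, …, f (n-1)]` is in `T`. -/
def IsPath (T : Set (List Bool)) (f : ℕ → Bool) : Prop :=
  ∀ n : ℕ, (List.ofFn fun i : Fin n => f i) ∈ T

/-- `σ` is an extendible node of `T`: `σ ∈ T` and `σ` has extensions in `T` of every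
greater length. -/
def Extendible (T : Set (List Bool)) (σ : List Bool) : Prop :=
  σ ∈ T ∧ ∀ n : ℕ, ∃ τ ∈ T, σ <+: τ ∧ τ.length = σ.length + n

/-- `T_ext^{=n}`: the set of extendible nodes of `T` of length `n`. -/
def extLevel (T : Set (List Bool)) (n : ℕ) : Set (List Bool) :=
  {σ : List Bool | Extendible T σ ∧ σ.length = n}

/-! The set of paths is a nonempty closed subset of Cantor space, so if it is countable then by the
Baire category theorem it has an isolated point `f`, say the only path through the string `σ`.
Such an `f` is computable: by compactness, for each `n` there is a level at which every node of
`T` above `σ` has `f n` as its `n`-th entry, and searching for such a level finds the value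
`f n`. -/

section InitialSegments

variable {α : Type*}

/-- The string `[f 0, …, f (n - 1)]`, written as in `IsPath` so that `IsPath T f` unfolds to
`∀ n, initSeg f n ∈ T`. -/
def initSeg (f : ℕ → α) (n : ℕ) : List α :=
  List.ofFn fun i : Fin n => f i

@[simp]
theorem length_initSeg (f : ℕ → α) (n : ℕ) : (initSeg f n).length = n :=
  List.length_ofFn

theorem getElem?_initSeg_of_lt (f : ℕ → α) {n i : ℕ} (h : i < n) :
    (initSeg f n)[i]? = some (f i) := by
  simp [initSeg, h]

theorem initSeg_add (f : ℕ → α) (m n : ℕ) :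
    initSeg f (m + n) = initSeg f m ++ initSeg (fun i => f (m + i)) n :=
  List.ofFn_add

theorem initSeg_prefix_initSeg (f : ℕ → α) {m n : ℕ} (h : m ≤ n) :
    initSeg f m <+: initSeg f n := by
  obtain ⟨k, rfl⟩ := Nat.exists_eq_add_of_le h
  rw [initSeg_add]
  exact List.prefix_append _ _

theorem exists_initSeg_length_eq [Inhabited α] (τ : List α) :
    ∃ f : ℕ → α, initSeg f τ.length = τ :=
  ⟨fun i => τ.getI i, by simp [initSeg, List.getI_eq_getElem]⟩

variable [TopologicalSpace α] [DiscreteTopology α]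

theorem isClopen_setOf_initSeg_mem (S : Set (List α)) (n : ℕ) :
    IsClopen {f : ℕ → α | initSeg f n ∈ S} :=
  (isClopen_discrete {v : Fin n → α | List.ofFn v ∈ S}).preimage
    (continuous_pi fun i => continuous_apply (i : ℕ))

theorem exists_initSeg_eq_imp_mem_of_isOpen {U : Set (ℕ → α)} (hU : IsOpen U) {f : ℕ → α}
    (hf : f ∈ U) : ∃ N, ∀ g, initSeg g N = initSeg f N → g ∈ U := by
  obtain ⟨_, ⟨x, N, rfl⟩, hfx, hxU⟩ :=
    (PiNat.isTopologicalBasis_cylinders fun _ => α).exists_subset_of_mem_open hf hU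
  refine ⟨N, fun g hg => hxU fun i hi => ?_⟩
  have hgf : g i = f i := Option.some.inj (by
    rw [← getElem?_initSeg_of_lt g hi, hg, getElem?_initSeg_of_lt f hi])
  exact hgf.trans (hfx i hi)

end InitialSegments

section Computability

variable {α β : Type*} [Primcodable α] [Primcodable β]

theorem computablePred_imp {p q : α → Prop} (hp : ComputablePred p) (hq : ComputablePred q) :
    ComputablePred fun a => p a → q a := by
  classical
  refine Computable.computablePred ((Primrec.or.to_comp.comp
    (Primrec.not.to_comp.comp hp.decide) hq.decide).of_eq fun a => ?_)
  by_cases h : p a <;> simp [h]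

theorem computable_list_all {L : α → List β} {p : α → β → Bool} (hL : Computable L)
    (hp : Computable₂ p) : Computable fun a => (L a).all (p a) := by
  have hstep : Computable₂ fun (a : α) (s : ℕ × Bool) =>
      s.2 && (((L a)[s.1]?).map (p a)).getD true :=
    Primrec.and.to_comp.comp (Computable.snd.comp Computable.snd)
      (Computable.option_getD
        (Computable.option_map
          (Computable.list_getElem?.comp (hL.comp Computable.fst)
            (Computable.fst.comp Computable.snd))
          (hp.comp (Computable.fst.comp Computable.fst) Computable.snd))
        (Computable.const true))
  refine (Computable.nat_rec (Computable.list_length.comp hL) (Computable.const true)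
    hstep).of_eq fun a => ?_
  have rec_eq_all_take : ∀ n, Nat.rec (motive := fun _ => Bool) true
      (fun i b => b && (((L a)[i]?).map (p a)).getD true) n = ((L a).take n).all (p a) := by
    intro n
    induction n with
    | zero => simp
    | succ n ih =>
      simp only [ih, List.take_add_one, List.all_append]
      cases (L a)[n]? <;> simp
  rw [rec_eq_all_take, List.take_length]

theorem computablePred_forall_mem_list {L : α → List β} {p : α → β → Prop} (hL : Computable L)
    (hp : ComputablePred fun x : α × β => p x.1 x.2) :
    ComputablePred fun a => ∀ b ∈ L a, p a b := by
  classical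
  exact Computable.computablePred ((computable_list_all (p := fun a b => decide (p a b)) hL
    hp.decide).of_eq fun a => by simp [List.all_eq])

theorem rePred_exists_nat {p : α → ℕ → Prop} (hp : ComputablePred fun x : α × ℕ => p x.1 x.2) :
    REPred fun a => ∃ n, p a n := by
  classical
  have hsearch : Partrec fun a => Nat.rfind fun n => Part.some (decide (p a n)) :=
    Partrec.rfind hp.decide.partrec
  exact hsearch.dom_re.of_eq fun a => Nat.rfind_dom.trans (by simp)

theorem computable_of_forall_rePred_eq {f : α → Bool} (h : ∀ b, REPred fun a => f a = b) :
    Computable f := by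
  have htrue : ComputablePred fun a => f a = true :=
    ComputablePred.computable_iff_re_compl_re.2 ⟨h true, (h false).of_eq fun a => by simp⟩
  exact htrue.decide.of_eq fun a => by simp

/-- The list of all binary strings of length `n`, over which quantifiers bounded by a level of a
tree are evaluated. -/
def binStrings : ℕ → List (List Bool)
  | 0 => [[]]
  | n + 1 => (binStrings n).flatMap fun τ => [false :: τ, true :: τ]

theorem mem_binStrings {n : ℕ} {τ : List Bool} : τ ∈ binStrings n ↔ τ.length = n := by
  induction n generalizing τ with
  | zero => simp [binStrings]
  | succ n ih => rcases τ with _ | ⟨_ | _, τ⟩ <;> simp [binStrings, ih]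

theorem primrec_binStrings : Primrec binStrings := by
  have hcons (b : Bool) : Primrec fun x : (ℕ × List (List Bool)) × List Bool => b :: x.2 :=
    Primrec.list_cons.comp (Primrec.const b) Primrec.snd
  have hstep : Primrec₂ fun (_ : ℕ) (L : List (List Bool)) =>
      L.flatMap fun τ => [false :: τ, true :: τ] :=
    Primrec.list_flatMap Primrec.snd
      (Primrec.list_cons.comp (hcons false)
        (Primrec.list_cons.comp (hcons true) (Primrec.const [])))
  refine (Primrec.nat_rec₁ [[]] hstep).of_eq fun n => ?_
  induction n with
  | zero => rfl
  | succ n ih => simp only [binStrings, ih]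

end Computability

theorem exists_isOpen_inter_eq_singleton_of_countable {X : Type*} [TopologicalSpace X] [T1Space X]
    {S : Set X} [BaireSpace S] (hcount : S.Countable) (hne : S.Nonempty) :
    ∃ x, ∃ U, IsOpen U ∧ U ∩ S = {x} := by
  have : Countable S := hcount.to_subtype
  have : Nonempty S := hne.to_subtype
  obtain ⟨x, hx⟩ := nonempty_interior_of_iUnion_of_closed (f := fun x : S => {x})
    (fun _ => isClosed_singleton) (Set.iUnion_of_singleton S)
  have hxopen : IsOpen {x} := by
    rw [← hx.subset_singleton_iff.1 interior_subset]
    exact isOpen_interior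
  obtain ⟨U, hU, hUx⟩ := isOpen_induced_iff.1 hxopen
  refine ⟨x, U, hU, ?_⟩
  rw [Set.inter_comm, ← Subtype.image_preimage_coe, hUx, Set.image_singleton]

section Paths

theorem isClosed_setOf_isPath (T : Set (List Bool)) : IsClosed {f | IsPath T f} := by
  have hinter : {f | IsPath T f} = ⋂ n, {f | initSeg f n ∈ T} := by
    ext f
    simp [IsPath, initSeg]
  rw [hinter]
  exact isClosed_iInter fun n => (isClopen_setOf_initSeg_mem T n).isClosed

variable {T : Set (List Bool)}

theorem IsBinTree.exists_initSeg_mem_imp_mem (hT : IsBinTree T) {U : Set (ℕ → Bool)}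
    (hU : IsOpen U) (hpaths : ∀ f, IsPath T f → f ∈ U) :
    ∃ n, ∀ f, initSeg f n ∈ T → f ∈ U := by
  have hanti : Antitone fun n => {f : ℕ → Bool | initSeg f n ∈ T} :=
    fun _ _ hmn f hf => hT _ _ (initSeg_prefix_initSeg f hmn) hf
  exact exists_subset_nhds_of_compactSpace hanti.directed_ge
    (fun n => (isClopen_setOf_initSeg_mem T n).isClosed)
    (fun f hf => hU.mem_nhds (hpaths f (Set.mem_iInter.1 hf)))

theorem IsBinTree.exists_isPath (hT : IsBinTree T) (hinf : ∀ n, ∃ σ ∈ T, σ.length = n) :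
    ∃ f, IsPath T f := by
  by_contra! hno
  obtain ⟨n, hn⟩ := hT.exists_initSeg_mem_imp_mem isOpen_empty fun f hf => hno f hf
  obtain ⟨σ, hσ, rfl⟩ := hinf n
  obtain ⟨f, hf⟩ := exists_initSeg_length_eq σ
  exact hn f (by rwa [hf])

/-- Level `m` of `T` above `σ` decides the value `b` at `n`: every node of `T` that extends `σ` by
`m` further bits has `b` as its `n`-th entry. In particular such nodes are longer than `n`. -/
def LevelDecides (T : Set (List Bool)) (σ : List Bool) (m n : ℕ) (b : Bool) : Prop :=
  ∀ ρ : List Bool, ρ.length = m → σ ++ ρ ∈ T → (σ ++ ρ)[n]? = some b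

theorem computablePred_levelDecides (hcomp : ComputablePred (· ∈ T)) (σ : List Bool) (b : Bool) :
    ComputablePred fun x : ℕ × ℕ => LevelDecides T σ x.2 x.1 b := by
  classical
  have happend : Computable fun x : (ℕ × ℕ) × List Bool => σ ++ x.2 :=
    Computable.list_append.comp (Computable.const σ) Computable.snd
  have hmem : ComputablePred fun x : (ℕ × ℕ) × List Bool => σ ++ x.2 ∈ T :=
    (hcomp.decide.comp happend).computablePred
  have hentry : Computable fun x : (ℕ × ℕ) × List Bool => (σ ++ x.2)[x.1.1]? :=
    Computable.list_getElem?.comp happend (Computable.fst.comp Computable.fst)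
  have heq : Computable fun o : Option Bool => decide (o = some b) :=
    (Primrec.dom_finite _).to_comp
  refine (computablePred_forall_mem_list (p := fun x ρ => σ ++ ρ ∈ T → (σ ++ ρ)[x.1]? = some b)
    (primrec_binStrings.to_comp.comp Computable.snd)
    (computablePred_imp hmem (heq.comp hentry).computablePred)).of_eq fun x => ?_
  simp only [LevelDecides, mem_binStrings]

theorem LevelDecides.apply_eq {f : ℕ → Bool} {N m n : ℕ} {b : Bool}
    (h : LevelDecides T (initSeg f N) m n b) (hf : IsPath T f) : f n = b := by
  have hb : (initSeg f (N + m))[n]? = some b := by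
    rw [initSeg_add]
    exact h _ (length_initSeg _ _) (initSeg_add f N m ▸ hf (N + m))
  have hn : n < N + m := by
    simpa using (List.getElem?_eq_some_iff.1 hb).1
  rwa [getElem?_initSeg_of_lt f hn, Option.some_inj] at hb

theorem IsBinTree.exists_levelDecides (hT : IsBinTree T) {f : ℕ → Bool} {N : ℕ}
    (hiso : ∀ g, IsPath T g → initSeg g N = initSeg f N → g = f) (n : ℕ) :
    ∃ m, LevelDecides T (initSeg f N) m n (f n) := by
  have hopen : IsOpen {g : ℕ → Bool | initSeg g N = initSeg f N → g n = f n} := by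
    have heval : Continuous fun g : ℕ → Bool => g n := continuous_apply n
    simp only [imp_iff_not_or]
    exact (isClopen_setOf_initSeg_mem {initSeg f N}ᶜ N).isOpen.union
      ((isOpen_discrete {f n}).preimage heval)
  obtain ⟨k, hk⟩ := hT.exists_initSeg_mem_imp_mem hopen fun g hg hgf => by rw [hiso g hg hgf]
  refine ⟨k + (n + 1), fun ρ hρ hρT => ?_⟩
  obtain ⟨g, hg⟩ := exists_initSeg_length_eq (initSeg f N ++ ρ)
  rw [List.length_append, length_initSeg, hρ] at hg
  have hgN : initSeg g N = initSeg f N := by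
    rw [initSeg_add] at hg
    exact List.append_inj_left hg (by simp only [length_initSeg])
  have hgk : initSeg g k ∈ T :=
    hT _ _ (initSeg_prefix_initSeg g (by lia)) (hg ▸ hρT)
  rw [← hg, getElem?_initSeg_of_lt g (by lia), hk g hgk hgN]

theorem IsBinTree.computable_of_isolated (hT : IsBinTree T) (hcomp : ComputablePred (· ∈ T))
    {f : ℕ → Bool} {U : Set (ℕ → Bool)} (hU : IsOpen U) (hf : U ∩ {g | IsPath T g} = {f}) :
    Computable f := by
  have hfU : f ∈ U ∩ {g | IsPath T g} := hf ▸ rfl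
  obtain ⟨N, hN⟩ := exists_initSeg_eq_imp_mem_of_isOpen hU hfU.1
  have hiso : ∀ g, IsPath T g → initSeg g N = initSeg f N → g = f := fun g hg hgN =>
    hf.subset ⟨hN g hgN, hg⟩
  exact computable_of_forall_rePred_eq fun b =>
    (rePred_exists_nat (computablePred_levelDecides hcomp (initSeg f N) b)).of_eq fun n =>
      ⟨fun ⟨_, hm⟩ => hm.apply_eq hfU.2, fun hb => hb ▸ hT.exists_levelDecides hiso n⟩

end Paths

theorem stmt12_general (T : Set (List Bool)) (hT : IsBinTree T) (hcomp : ComputablePred (· ∈ T))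
    (hinf : ∀ n : ℕ, ∃ σ ∈ T, σ.length = n)
    (hcount : {f : ℕ → Bool | IsPath T f}.Countable) :
    ∃ f : ℕ → Bool, Computable f ∧ IsPath T f := by
  have : CompactSpace {f | IsPath T f} :=
    isCompact_iff_compactSpace.1 (isClosed_setOf_isPath T).isCompact
  obtain ⟨f, U, hU, hf⟩ :=
    exists_isOpen_inter_eq_singleton_of_countable hcount (hT.exists_isPath hinf)
  have hfU : f ∈ U ∩ {g | IsPath T g} := hf ▸ rfl
  exact ⟨f, hT.computable_of_isolated hcomp hU hf, hfU.2⟩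

/-- A computable infinite binary tree with only finitely many paths has a computable path. -/
theorem stmt12 (T : Set (List Bool)) (hT : IsBinTree T) (hcomp : ComputablePred (· ∈ T))
    (hinf : ∀ n : ℕ, ∃ σ ∈ T, σ.length = n)
    (hfin : {f : ℕ → Bool | IsPath T f}.Finite) :
    ∃ f : ℕ → Bool, Computable f ∧ IsPath T f :=
  stmt12_general T hT hcomp hinf hfin.countable
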